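/- The real number I_cc := −2∫₀¹ 3x²(x²−3)/(2x⁴−6x²+9)² dx + 2∫₁² (7x−5x²)/(26x²−70x+49)² dx − 2∫₂⁵ 3x/(9+x²)² dx + ∫₅⁷ (3x²−21x)/((441/4) − (63/2)x + (13/4)x²)² dx is strictly negative. -/

import Mathlib

/-!
Up to constants, all four integrands are `X * Y / (X ^ 2 + Y ^ 2) ^ 2` along a line `Y = m * X + n`
that misses the origin, parametrized by `X = x ^ k`, with `k = 2` for the first and `k = 1` for the
others. Writing `Q = X ^ 2 + Y ^ 2`, one has `x * Q' = 2 * k * (Q - n * Y)`, hence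
`(x ^ (k + 1) / Q)' = 2 * k * n * X * Y / Q ^ 2 - (k - 1) * X / Q`.
For `k = 1` the last term vanishes, so three of the integrals are rational: `1 / 130`, `63 / 884`
and `-3 / 119`. For `k = 2` the remaining integral is bounded using `5 ≤ Q` on `[0, 1]`, so the
first integral is at least `-1 / 15`.
-/

open Set

/-- The squared distance from the origin to the point `(x ^ k, m * x ^ k + n)` of the line of slope
`m` and intercept `n`: its square is the denominator of the integrands. The line is parametrized by
a power so that the cases `k = 1` and `k = 2` can be treated together. -/
noncomputable def lineNormSq (k : ℕ) (m n x : ℝ) : ℝ :=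
  (x ^ k) ^ 2 + (m * x ^ k + n) ^ 2

section LineNormSq

variable {k : ℕ} {m n : ℝ}

theorem lineNormSq_ne_zero (hn : n ≠ 0) (x : ℝ) : lineNormSq k m n x ≠ 0 := by
  intro h
  have hX : x ^ k = 0 := by unfold lineNormSq at h; nlinarith [sq_nonneg (m * x ^ k + n)]
  exact hn (by simpa [lineNormSq, hX] using h)

@[fun_prop]
theorem continuous_lineNormSq : Continuous (lineNormSq k m n) := by
  unfold lineNormSq
  fun_prop

theorem hasDerivAt_lineNormSq (x : ℝ) :
    HasDerivAt (lineNormSq k m n)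
      (2 * (x ^ k + m * (m * x ^ k + n)) * (k * x ^ (k - 1))) x := by
  have hX : HasDerivAt (fun x : ℝ ↦ x ^ k) (k * x ^ (k - 1)) x := hasDerivAt_pow k x
  have hY : HasDerivAt (fun x ↦ m * x ^ k + n) (m * (k * x ^ (k - 1))) x :=
    (hX.const_mul m).add_const n
  refine ((hX.pow 2).add (hY.pow 2)).congr_deriv ?_
  push_cast
  ring

theorem hasDerivAt_pow_succ_div_lineNormSq (hn : n ≠ 0) (x : ℝ) :
    HasDerivAt (fun x ↦ x ^ (k + 1) / lineNormSq k m n x)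
      (2 * k * n * (x ^ k * (m * x ^ k + n) / lineNormSq k m n x ^ 2)
        - (k - 1) * (x ^ k / lineNormSq k m n x)) x := by
  have hQ : lineNormSq k m n x ≠ 0 := lineNormSq_ne_zero hn x
  have euler : (k : ℝ) * x ^ (k - 1) * x = k * x ^ k := by
    cases k with
    | zero => simp
    | succ k => simp [pow_succ, mul_assoc]
  have euler_lineNormSq : x * (2 * (x ^ k + m * (m * x ^ k + n)) * (k * x ^ (k - 1)))
      = 2 * k * (lineNormSq k m n x - n * (m * x ^ k + n)) := by
    unfold lineNormSq
    linear_combination 2 * (x ^ k + m * (m * x ^ k + n)) * euler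
  refine ((hasDerivAt_pow (k + 1) x).div (hasDerivAt_lineNormSq x) hQ).congr_deriv ?_
  rw [add_tsub_cancel_right, pow_succ, mul_assoc (x ^ k) x, euler_lineNormSq]
  field_simp
  push_cast
  ring

theorem integral_pow_mul_div_lineNormSq_sq (hn : n ≠ 0) (u v : ℝ) :
    2 * k * n * (∫ x in u..v, x ^ k * (m * x ^ k + n) / lineNormSq k m n x ^ 2)
      = v ^ (k + 1) / lineNormSq k m n v - u ^ (k + 1) / lineNormSq k m n u
        + (k - 1) * ∫ x in u..v, x ^ k / lineNormSq k m n x := by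
  have hmain : Continuous fun x ↦ x ^ k * (m * x ^ k + n) / lineNormSq k m n x ^ 2 :=
    Continuous.div (by fun_prop) (by fun_prop) fun x ↦ pow_ne_zero 2 (lineNormSq_ne_zero hn x)
  have hrem : Continuous fun x ↦ x ^ k / lineNormSq k m n x :=
    Continuous.div (by fun_prop) (by fun_prop) (lineNormSq_ne_zero hn)
  have hmain' := (hmain.const_mul (2 * k * n)).intervalIntegrable (μ := MeasureTheory.volume) u v
  have hrem' := (hrem.const_mul ((k : ℝ) - 1)).intervalIntegrable (μ := MeasureTheory.volume) u v
  have ftc := intervalIntegral.integral_eq_sub_of_hasDerivAt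
    (fun x _ ↦ hasDerivAt_pow_succ_div_lineNormSq hn x) (hmain'.sub hrem')
  rw [intervalIntegral.integral_sub hmain' hrem', intervalIntegral.integral_const_mul,
    intervalIntegral.integral_const_mul] at ftc
  linarith

theorem integral_pow_div_lineNormSq_le {u v c : ℝ} (hu : 0 ≤ u) (huv : u ≤ v) (hc : 0 < c)
    (hQ : ∀ x ∈ Icc u v, c ≤ lineNormSq k m n x) :
    ∫ x in u..v, x ^ k / lineNormSq k m n x ≤ (v ^ (k + 1) - u ^ (k + 1)) / (k + 1) / c := by
  have hcont : ContinuousOn (fun x ↦ x ^ k / lineNormSq k m n x) (Icc u v) :=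
    ContinuousOn.div (by fun_prop) (by fun_prop) fun x hx ↦ (hc.trans_le (hQ x hx)).ne'
  calc ∫ x in u..v, x ^ k / lineNormSq k m n x
      ≤ ∫ x in u..v, x ^ k / c :=
        intervalIntegral.integral_mono_on huv (hcont.intervalIntegrable_of_Icc huv)
          (Continuous.intervalIntegrable (by fun_prop) u v) fun x hx ↦
            div_le_div_of_nonneg_left (pow_nonneg (hu.trans hx.1) k) hc (hQ x hx)
    _ = (v ^ (k + 1) - u ^ (k + 1)) / (k + 1) / c := by
        rw [intervalIntegral.integral_div, integral_pow]

end LineNormSq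

theorem integral_mul_affine_div_sq {m n : ℝ} (hn : n ≠ 0) (u v : ℝ) :
    ∫ x in u..v, x * (m * x + n) / (x ^ 2 + (m * x + n) ^ 2) ^ 2
      = (v ^ 2 / (v ^ 2 + (m * v + n) ^ 2) - u ^ 2 / (u ^ 2 + (m * u + n) ^ 2)) / (2 * n) := by
  have h := integral_pow_mul_div_lineNormSq_sq (k := 1) (m := m) hn u v
  simp only [lineNormSq, pow_one, Nat.cast_one, mul_one, sub_self, zero_mul, add_zero,
    one_add_one_eq_two] at h
  rw [← h, mul_div_cancel_left₀ _ (by positivity)]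

theorem five_le_lineNormSq_two_one_neg_three {x : ℝ} (hx : x ∈ Icc 0 1) :
    5 ≤ lineNormSq 2 1 (-3) x := by
  have hx2 : x ^ 2 ≤ 1 := pow_le_one₀ hx.1 hx.2
  have factored : lineNormSq 2 1 (-3) x - 5 = 2 * (1 - x ^ 2) * (2 - x ^ 2) := by
    unfold lineNormSq
    ring
  nlinarith

theorem neg_one_div_fifteen_le_integral_quartic :
    -(1 / 15) ≤ ∫ x in (0 : ℝ)..1, 3 * x ^ 2 * (x ^ 2 - 3) / (2 * x ^ 4 - 6 * x ^ 2 + 9) ^ 2 := by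
  have parts := integral_pow_mul_div_lineNormSq_sq (k := 2) (m := 1) (n := -3) (by norm_num) 0 1
  have remainder := integral_pow_div_lineNormSq_le (k := 2) (m := 1) (n := -3) le_rfl zero_le_one
    (by norm_num) fun x ↦ five_le_lineNormSq_two_one_neg_three
  have endpoint : lineNormSq 2 1 (-3) 1 = 5 := by norm_num [lineNormSq]
  have integrand (x : ℝ) : 3 * x ^ 2 * (x ^ 2 - 3) / (2 * x ^ 4 - 6 * x ^ 2 + 9) ^ 2
      = 3 * (x ^ 2 * (1 * x ^ 2 + -3) / lineNormSq 2 1 (-3) x ^ 2) := by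
    unfold lineNormSq
    ring
  simp only [integrand, intervalIntegral.integral_const_mul]
  norm_num [endpoint] at parts remainder ⊢
  linarith

/-- The center-center contribution `I_cc` to the derivative of the horizontal velocity at
the middle vertical tangent of the curve constructed in the paper is strictly negative. -/
theorem Icc_neg :
    (-2) * (∫ x in (0:ℝ)..1, 3*x^2*(x^2-3)/(2*x^4-6*x^2+9)^2)
      + 2 * (∫ x in (1:ℝ)..2, (7*x-5*x^2)/(26*x^2-70*x+49)^2)
      - 2 * (∫ x in (2:ℝ)..5, 3*x/(9+x^2)^2)
      + (∫ x in (5:ℝ)..7, (3*x^2-21*x)/(441/4 - 63/2*x + 13/4*x^2)^2) < 0 := by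
  have first := neg_one_div_fifteen_le_integral_quartic
  have second : ∫ x in (1:ℝ)..2, (7*x-5*x^2)/(26*x^2-70*x+49)^2 = 1 / 130 := by
    calc _ = ∫ x in (1:ℝ)..2, -(x * (5 * x + -7) / (x ^ 2 + (5 * x + -7) ^ 2) ^ 2) := by
          congr! 2 with x; ring
      _ = 1 / 130 := by
          rw [intervalIntegral.integral_neg, integral_mul_affine_div_sq (by norm_num)]; norm_num
  have third : ∫ x in (2:ℝ)..5, 3*x/(9+x^2)^2 = 63 / 884 := by
    calc _ = ∫ x in (2:ℝ)..5, x * (0 * x + 3) / (x ^ 2 + (0 * x + 3) ^ 2) ^ 2 := by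
          congr! 2 with x; ring
      _ = 63 / 884 := by
          rw [integral_mul_affine_div_sq (by norm_num)]; norm_num
  have fourth : ∫ x in (5:ℝ)..7, (3*x^2-21*x)/(441/4 - 63/2*x + 13/4*x^2)^2 = -(3 / 119) := by
    calc _ = ∫ x in (5:ℝ)..7, 2 * (x * (3 / 2 * x + -(21 / 2))
            / (x ^ 2 + (3 / 2 * x + -(21 / 2)) ^ 2) ^ 2) := by
          congr! 2 with x; ring
      _ = -(3 / 119) := by
          rw [intervalIntegral.integral_const_mul, integral_mul_affine_div_sq (by norm_num)]
          norm_num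
  linarith
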